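/- Let A be a bounded self-adjoint operator on H with finite spectrum, and let O_A = {uAu* : u ∈ U_c(H)}. Then the map π_A(u) = uAu* has a continuous local cross section: there exist a constant C > 0 and a continuous map θ : {b ∈ O_A : ‖b − A‖ < C} → U_c(H) such that θ(b)·A·θ(b)* = b for every b in this set. -/

import Mathlib

noncomputable section

variable {H : Type*} [NormedAddCommGroup H] [InnerProductSpace ℂ H] [CompleteSpace H]

/-- The unitary Fredholm group. -/
def Uc (H : Type*) [NormedAddCommGroup H] [InnerProductSpace ℂ H] [CompleteSpace H] :
    Set (H →L[ℂ] H) :=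
  {u | u ∈ unitary (H →L[ℂ] H) ∧ IsCompactOperator ⇑(u - 1)}

/-- The unitary orbit of an operator `A` under the Fredholm group. -/
def orbit (A : H →L[ℂ] H) : Set (H →L[ℂ] H) :=
  {b | ∃ u ∈ Uc H, b = u * A * star u}

open Polynomial in
lemma aux_aeval (A : H →L[ℂ] H) (hA : star A = A) (p q : ℂ[X])
    (h : ∀ x ∈ spectrum ℂ A, p.eval x = q.eval x) : aeval A p = aeval A q := by
  have hn : IsStarNormal A := IsSelfAdjoint.isStarNormal hA
  rw [← cfc_polynomial p A, ← cfc_polynomial q A]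
  exact cfc_congr h

lemma aux_mul_left (X : H →L[ℂ] H) {K : H →L[ℂ] H} (hK : IsCompactOperator K) :
    IsCompactOperator (X * K : H →L[ℂ] H) := hK.clm_comp X

lemma aux_mul_right (X : H →L[ℂ] H) {K : H →L[ℂ] H} (hK : IsCompactOperator K) :
    IsCompactOperator (K * X : H →L[ℂ] H) := hK.comp_clm X

lemma aux_add {K L : H →L[ℂ] H} (hK : IsCompactOperator K) (hL : IsCompactOperator L) :
    IsCompactOperator (K + L : H →L[ℂ] H) := hK.add hL

lemma aux_sum {ι : Type*} (s : Finset ι) (K : ι → H →L[ℂ] H)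
    (hK : ∀ i ∈ s, IsCompactOperator (K i)) :
    IsCompactOperator (∑ i ∈ s, K i : H →L[ℂ] H) := by
  classical
  induction s using Finset.induction_on with
  | empty => simpa using! (isCompactOperator_zero : IsCompactOperator (0 : H → H))
  | insert a s ha ih =>
    rw [Finset.sum_insert ha]
    exact aux_add (hK a (by simp)) (ih fun i hi => hK i (by simp [hi]))

lemma aux_conj {u : H →L[ℂ] H} (hu : u ∈ Uc H) (X : H →L[ℂ] H) :
    IsCompactOperator (u * X * star u - X : H →L[ℂ] H) := by
  obtain ⟨h1, h2⟩ := hu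
  have e1 : star u * u = 1 := Unitary.star_mul_self_of_mem h1
  have : u * X * star u - X = (u - 1) * (X * star u) + (-(X * star u)) * (u - 1) := by
    simp only [sub_mul, mul_sub, neg_mul, one_mul, mul_one, mul_assoc, e1]
    abel
  rw [this]
  exact aux_add (aux_mul_right _ h2) (aux_mul_left _ h2)

lemma aux_pos {s : H →L[ℂ] H} (hs : IsUnit s) : IsStrictlyPositive (star s * s) :=
  (CStarAlgebra.isStrictlyPositive_iff_eq_star_mul_self).mpr ⟨s, hs, rfl⟩

/-- unitary part -/
def upart (s : H →L[ℂ] H) : H →L[ℂ] H := s * (star s * s) ^ (-(1/2) : ℝ)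

lemma upart_cont : ContinuousOn (upart : (H →L[ℂ] H) → _) {s | IsUnit s} := by
  unfold upart
  refine continuousOn_id.mul ?_
  simp only [CFC.rpow_def]
  refine ContinuousOn.cfc_nnreal_of_mem_nhdsSet (s := {0}ᶜ) _ ?_ ?_ ?_ ?_
  · refine isOpen_compl_singleton.mem_nhdsSet.mpr ?_
    refine Set.iUnion₂_subset fun s hs x hx => ?_
    rintro rfl
    exact spectrum.zero_notMem _ (aux_pos hs).isUnit hx
  · fun_prop
  · exact fun s hs => star_mul_self_nonneg s
  · intro x hx
    exact (NNReal.continuousAt_rpow_const (Or.inl hx)).continuousWithinAt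

lemma upart_spec {A b s : H →L[ℂ] H} (hA : star A = A) (hb : star b = b) (hs : IsUnit s)
    (h : b * s = s * A) (hc : IsCompactOperator (s - 1 : H →L[ℂ] H))
    (hc' : IsCompactOperator (star s - 1 : H →L[ℂ] H)) :
    upart s ∈ Uc H ∧ upart s * A * star (upart s) = b := by
  have hp := aux_pos hs
  set a := star s * s with ha
  set t : H →L[ℂ] H := a ^ (-(1/2) : ℝ) with ht
  have hu : upart s = s * t := rfl
  have htn : 0 ≤ t := CFC.rpow_nonneg
  have hts : star t = t := (IsSelfAdjoint.of_nonneg htn)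
  have htt : t * t = a ^ (-1 : ℝ) := by
    rw [ht, ← CFC.rpow_add hp.isUnit]; norm_num
  have hta : t * t * a = 1 := by
    rw [htt]
    nth_rewrite 2 [← CFC.rpow_one a hp.nonneg]
    exact CFC.rpow_neg_mul_rpow 1 hp
  have hat : a * (t * t) = 1 := by
    rw [htt]
    nth_rewrite 1 [← CFC.rpow_one a hp.nonneg]
    exact CFC.rpow_mul_rpow_neg 1 hp
  have h' : star s * b = A * star s := by
    simpa [hA, hb] using congrArg star h
  have hcom : Commute a A := by
    change star s * s * A = A * (star s * s)
    rw [mul_assoc, ← h, ← mul_assoc, h', mul_assoc]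
  have htA : Commute t A := hcom.cfc_nnreal _
  have hta' : Commute t a := (Commute.refl a).cfc_nnreal _
  have hsts : s * (t * t) * star s = 1 := by
    have h1 : (t * t * star s) * s = 1 := by rw [mul_assoc]; exact hta
    have := hs.mul_left_inj.mp (show (s * (t * t) * star s) * s = 1 * s by
      rw [mul_assoc, mul_assoc, ← mul_assoc, mul_assoc s, ← ha, hta]; simp)
    exact this
  refine ⟨⟨?_, ?_⟩, ?_⟩
  · rw [Unitary.mem_iff, hu, star_mul, hts]
    constructor
    · calc t * star s * (s * t) = t * a * t := by simp only [ha, mul_assoc]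
        _ = 1 := by rw [hta'.eq, mul_assoc, hat]
    · simpa only [mul_assoc] using hsts
  · have hpos : IsUnit (1 + t) := by
      exact (isStrictlyPositive_one.add_nonneg htn).isUnit
    obtain ⟨v, hv⟩ := hpos
    have hac : IsCompactOperator (a - 1 : H →L[ℂ] H) := by
      have : a - 1 = star s * (s - 1) + (star s - 1) := by rw [ha, mul_sub]; simp
      rw [this]
      exact aux_add (aux_mul_left _ hc) hc'
    have htc : t - 1 = (↑v⁻¹ : H →L[ℂ] H) * (-(t * t) * (a - 1)) := by
      rw [Units.eq_inv_mul_iff_mul_eq, hv]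
      simp only [mul_sub, neg_mul, hta, mul_one, add_mul, one_mul]
      abel
    have : upart s - 1 = (s - 1) * t + (t - 1) := by rw [hu, sub_mul]; simp
    rw [this]
    refine aux_add (aux_mul_right _ hc) ?_
    rw [htc]
    exact aux_mul_left _ (aux_mul_left _ hac)
  · rw [hu, star_mul, hts]
    calc s * t * A * (t * star s) = s * (t * A) * t * star s := by simp only [mul_assoc]
      _ = (s * A) * t * t * star s := by rw [htA.eq]; simp only [mul_assoc]
      _ = b * (s * (t * t) * star s) := by rw [← h]; simp only [mul_assoc]
      _ = b := by rw [hsts, mul_one]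

open Polynomial in
/-- The intertwiner. -/
def inter (S : Finset ℂ) (A b : H →L[ℂ] H) : H →L[ℂ] H :=
  ∑ i ∈ S, aeval b (Lagrange.basis S id i) * aeval A (Lagrange.basis S id i)

open Polynomial in
lemma inter_cont (S : Finset ℂ) (A : H →L[ℂ] H) : Continuous (inter S A) := by
  unfold inter
  refine continuous_finsetSum _ fun i _ => Continuous.mul ?_ continuous_const
  exact Polynomial.continuous_aeval _

open Polynomial in
lemma inter_self (S : Finset ℂ) (A : H →L[ℂ] H) (hA : star A = A)
    (hS : ∀ x, x ∈ spectrum ℂ A → x ∈ S) : inter S A A = 1 := by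
  unfold inter
  simp only [← map_mul, ← map_sum]
  rw [← map_one (aeval A : ℂ[X] →ₐ[ℂ] (H →L[ℂ] H))]
  refine aux_aeval A hA _ _ fun x hx => ?_
  rw [eval_finsetSum, Finset.sum_eq_single x]
  · have := Lagrange.eval_basis_self (s := S) (v := id) (i := x) (Set.injOn_id _) (hS x hx)
    simp only [id] at this
    simp [this]
  · intro i hi hix
    have := Lagrange.eval_basis_of_ne (s := S) (v := id) hix (hS x hx)
    simp only [id] at this
    simp [this]
  · intro h; exact absurd (hS x hx) h

open Polynomial in
lemma aux_eig (S : Finset ℂ) (A : H →L[ℂ] H) (hA : star A = A)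
    (hS : ∀ x, x ∈ spectrum ℂ A → x ∈ S) (i : ℂ) :
    A * aeval A (Lagrange.basis S id i) = i • aeval A (Lagrange.basis S id i) := by
  have := aux_aeval A hA (X * Lagrange.basis S id i) (C i * Lagrange.basis S id i) (by
    intro x hx
    by_cases hix : i = x
    · simp [hix]
    · have := Lagrange.eval_basis_of_ne (s := S) (v := id) hix (hS x hx)
      simp only [id] at this
      simp [this])
  simpa [Algebra.smul_def] using this

open Polynomial in
lemma aux_aeval_conj {u : H →L[ℂ] H} (hu : u ∈ unitary (H →L[ℂ] H)) (A : H →L[ℂ] H) (p : ℂ[X]) :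
    aeval (u * A * star u) p = u * aeval A p * star u := by
  have := Polynomial.aeval_algHom_apply
    ((Unitary.conjStarAlgAut ℂ (H →L[ℂ] H) ⟨u, hu⟩ : (H →L[ℂ] H) ≃⋆ₐ[ℂ] (H →L[ℂ] H)) :
      (H →L[ℂ] H) →⋆ₐ[ℂ] (H →L[ℂ] H)).toAlgHom A p
  simpa using this

theorem stmt12 (A : H →L[ℂ] H) (hA : star A = A) (hspec : (spectrum ℂ A).Finite) :
    ∃ C : ℝ, 0 < C ∧ ∃ θ : (H →L[ℂ] H) → (H →L[ℂ] H),
      ContinuousOn θ {b | b ∈ orbit A ∧ ‖b - A‖ < C} ∧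
      ∀ b, b ∈ orbit A → ‖b - A‖ < C → θ b ∈ Uc H ∧ θ b * A * star (θ b) = b := by
  set S := hspec.toFinset with hSdef
  have hS : ∀ x, x ∈ spectrum ℂ A → x ∈ S := fun x hx => by simpa [hSdef] using hx
  have hself := inter_self S A hA hS
  have hev : ∀ᶠ b in nhds A, IsUnit (inter S A b) := by
    refine (inter_cont S A).continuousAt.eventually ?_
    rw [hself]
    exact Units.isOpen.mem_nhds isUnit_one
  obtain ⟨C, hC, hball⟩ := Metric.eventually_nhds_iff.mp hev
  have hunit : ∀ b, ‖b - A‖ < C → IsUnit (inter S A b) := fun b hb =>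
    hball (by rwa [dist_eq_norm])
  refine ⟨C, hC, fun b => upart (inter S A b), ?_, ?_⟩
  · exact upart_cont.comp (inter_cont S A).continuousOn fun b hb => hunit b hb.2
  · rintro b ⟨u, hu, rfl⟩ hb
    have e1 : star u * u = 1 := Unitary.star_mul_self_of_mem hu.1
    set P : ℂ → H →L[ℂ] H := fun i => Polynomial.aeval A (Lagrange.basis S id i) with hP
    have hint : inter S A (u * A * star u) = ∑ i ∈ S, (u * P i * star u) * P i := by
      unfold inter
      simp only [aux_aeval_conj hu.1, hP]
    have hone : ∑ i ∈ S, P i * P i = 1 := hself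
    have hsub : inter S A (u * A * star u) - 1 = ∑ i ∈ S, (u * P i * star u - P i) * P i := by
      rw [hint, ← hone, ← Finset.sum_sub_distrib]
      simp only [sub_mul]
    have heig : ∀ i, A * P i = i • P i := aux_eig S A hA hS
    have heig' : ∀ i, P i * A = i • P i := fun i => by
      rw [← heig i]
      have h2 := congrArg (Polynomial.aeval A)
        (mul_comm (Lagrange.basis S id i) (Polynomial.X : Polynomial ℂ))
      simpa [hP] using h2
    refine upart_spec hA ?_ (hunit _ hb) ?_ ?_ ?_
    · simp [hA, mul_assoc]
    · rw [hint, Finset.mul_sum, Finset.sum_mul]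
      refine Finset.sum_congr rfl fun i _ => ?_
      rw [mul_assoc (u * P i * star u) (P i) A, heig' i]
      calc u * A * star u * (u * P i * star u * P i)
          = u * A * (star u * u) * P i * star u * P i := by simp only [mul_assoc]
        _ = u * (A * P i) * star u * P i := by rw [e1]; simp only [mul_assoc, one_mul]
        _ = _ := by rw [heig i]; simp
    · rw [hsub]
      exact aux_sum _ _ fun i _ => aux_mul_right _ (aux_conj hu _)
    · have : star (inter S A (u * A * star u)) - 1
          = ∑ i ∈ S, star (P i) * (u * star (P i) * star u - star (P i)) := by
        have := congrArg star hsub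
        simpa [star_sum, mul_assoc] using this
      rw [this]
      exact aux_sum _ _ fun i _ => aux_mul_left _ (aux_conj hu _)
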